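/- Let φ = (1+√5)/2 and let τ ∈ ℝ with τ ≠ 0 and τ ≠ 1. The matrix M(1/(1−τ), 1 − 1/τ, τ) maps the cone 𝒬 into itself if and only if τ belongs to (−φ, −φ⁻¹) ∪ (φ⁻², φ⁻¹) ∪ (φ, φ²). -/

import Mathlib

/-- The open cone: the interior, in the first octant, of the cone
`x² + y² + z² = 2(xy + yz + zx)`, as a set of vectors in `Fin 3 → ℝ`. -/
def Q : Set (Fin 3 → ℝ) :=
  {v | 0 < v 0 ∧ 0 < v 1 ∧ 0 < v 2 ∧
    (v 0) ^ 2 + (v 1) ^ 2 + (v 2) ^ 2 <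
      2 * (v 0 * v 1 + v 1 * v 2 + v 2 * v 0)}

/-- The matrix `M(ρ, σ, τ)`. -/
def M (ρ σ τ : ℝ) : Matrix (Fin 3) (Fin 3) ℝ :=
  !![ρ * (ρ - 1), ρ, 1 - ρ;
     1 - σ, σ * (σ - 1), σ;
     τ, 1 - τ, τ * (τ - 1)]

/-- The golden ratio. -/
noncomputable def phi : ℝ := (1 + Real.sqrt 5) / 2

/-!
The matrix `M(1/(1-τ), 1-1/τ, τ)` has rank one: it sends `v` to `L(v) • w`, where
`L(v) = τ v₀ + (1-τ) v₁ + τ(τ-1) v₂` and `w = ((1-τ)⁻², τ⁻², 1)`. As a polynomial in `τ`, `L(v)` is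
a quadratic with leading coefficient `v₂` whose discriminant is the quadratic form defining the
cone. Hence `L` is positive on the cone, and the matrix preserves the cone exactly when `w` lies
in it. By Heron's formula, a vector of squares `(a², b², c²)` lies in the cone exactly when
`(a+b+c)(-a+b+c)(a-b+c)(a+b-c) > 0`. For `w` this product has the sign of
`-(τ²+τ-1)(τ²-3τ+1)(τ²-τ-1)`, whose six roots `±φ`, `±φ⁻¹`, `φ²` and `φ⁻²` bound three disjoint
intervals.
-/

open Set Matrix

section OrderedRing

variable {R : Type*} [CommRing R] [LinearOrder R] [IsStrictOrderedRing R]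

theorem quadratic_pos_of_discrim_neg {a b c : R} (ha : 0 < a) (h : discrim a b c < 0) (x : R) :
    0 < a * (x * x) + b * x + c := by
  have completed_square :
      4 * a * (a * (x * x) + b * x + c) = (2 * a * x + b) ^ 2 - discrim a b c := by
    rw [discrim]; ring
  refine pos_of_mul_pos_right (a := 4 * a) ?_ (by positivity)
  rw [completed_square]
  exact sub_pos.2 (h.trans_le (sq_nonneg _))

theorem sub_mul_sub_neg_iff_mem_Ioo {a b t : R} (hab : a ≤ b) :
    (t - a) * (t - b) < 0 ↔ t ∈ Ioo a b := by
  simp only [mul_neg_iff, sub_pos, sub_neg, mem_Ioo, or_iff_left_iff_imp]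
  exact fun h => absurd (h.1.trans_le hab) h.2.not_gt

theorem sub_mul_sub_pos_of_notMem_Icc {a b t : R} (hab : a ≤ b) (ht : t ∉ Icc a b) :
    0 < (t - a) * (t - b) := by
  rcases lt_or_ge t a with hta | hat
  · exact mul_pos_of_neg_of_neg (sub_neg.2 hta) (sub_neg.2 (hta.trans_le hab))
  · have hbt : b < t := not_le.1 fun htb => ht ⟨hat, htb⟩
    exact mul_pos (sub_pos.2 (hab.trans_lt hbt)) (sub_pos.2 hbt)

theorem prod_sub_mul_sub_neg_iff_exists_mem_Ioo {ι : Type*} [Fintype ι] {a b : ι → R}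
    (hab : ∀ i, a i ≤ b i)
    (hdisj : Pairwise fun i j => Disjoint (Icc (a i) (b i)) (Icc (a j) (b j))) (t : R) :
    ∏ i, (t - a i) * (t - b i) < 0 ↔ ∃ i, t ∈ Ioo (a i) (b i) := by
  classical
  constructor
  · contrapose!
    exact fun h => Finset.prod_nonneg fun i _ =>
      not_lt.1 ((sub_mul_sub_neg_iff_mem_Ioo (hab i)).not.2 (h i))
  · rintro ⟨i, hi⟩
    rw [← Finset.mul_prod_erase _ _ (Finset.mem_univ i)]
    refine mul_neg_of_neg_of_pos ((sub_mul_sub_neg_iff_mem_Ioo (hab i)).2 hi)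
      (Finset.prod_pos fun j hj => sub_mul_sub_pos_of_notMem_Icc (hab j) ?_)
    exact disjoint_left.1 (hdisj (Finset.ne_of_mem_erase hj).symm) (Ioo_subset_Icc_self hi)

end OrderedRing

theorem image_vecMulVec_subset_iff {K n : Type*} [Field K] [LinearOrder K] [IsStrictOrderedRing K]
    [Fintype n] {C : Set (n → K)} {w u : n → K} (hC : C.Nonempty)
    (hsmul : ∀ ⦃c : K⦄, 0 < c → ∀ ⦃v⦄, v ∈ C → c • v ∈ C)
    (hu : ∀ v ∈ C, 0 < u ⬝ᵥ v) :
    (vecMulVec w u).mulVec '' C ⊆ C ↔ w ∈ C := by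
  simp only [vecMulVec_mulVec, op_smul_eq_smul, image_subset_iff]
  constructor
  · intro h
    obtain ⟨v, hv⟩ := hC
    have hw := hsmul (inv_pos.2 (hu v hv)) (h hv)
    rwa [inv_smul_smul₀ (hu v hv).ne'] at hw
  · exact fun hw v hv => hsmul (hu v hv) hw

theorem one_mem_Q : (1 : Fin 3 → ℝ) ∈ Q := by
  norm_num [Q]

theorem smul_mem_Q ⦃c : ℝ⦄ (hc : 0 < c) ⦃v : Fin 3 → ℝ⦄ (hv : v ∈ Q) : c • v ∈ Q := by
  obtain ⟨h₀, h₁, h₂, hform⟩ := hv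
  refine ⟨mul_pos hc h₀, mul_pos hc h₁, mul_pos hc h₂, ?_⟩
  simp only [Pi.smul_apply, smul_eq_mul]
  linear_combination c ^ 2 * hform

theorem discrim_neg_of_mem_Q {v : Fin 3 → ℝ} (hv : v ∈ Q) :
    discrim (v 2) (v 0 - v 1 - v 2) (v 1) < 0 := by
  rw [discrim]
  linear_combination hv.2.2.2

theorem dotProduct_pos_of_mem_Q {v : Fin 3 → ℝ} (hv : v ∈ Q) (τ : ℝ) :
    0 < ![τ, 1 - τ, τ * (τ - 1)] ⬝ᵥ v := by
  have hquad := quadratic_pos_of_discrim_neg hv.2.2.1 (discrim_neg_of_mem_Q hv) τ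
  rw [vec3_dotProduct]
  simp only [cons_val]
  linear_combination hquad

theorem sq_mem_Q_iff {a b c : ℝ} (ha : a ≠ 0) (hb : b ≠ 0) (hc : c ≠ 0) :
    ![a ^ 2, b ^ 2, c ^ 2] ∈ Q ↔ 0 < (a + b + c) * (-a + b + c) * (a - b + c) * (a + b - c) := by
  have heron : (a + b + c) * (-a + b + c) * (a - b + c) * (a + b - c) =
      2 * (a ^ 2 * b ^ 2 + b ^ 2 * c ^ 2 + c ^ 2 * a ^ 2) -
        ((a ^ 2) ^ 2 + (b ^ 2) ^ 2 + (c ^ 2) ^ 2) := by ring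
  rw [heron, sub_pos]
  simp [Q, sq_pos_of_ne_zero, ha, hb, hc]

/-- The monic polynomial with roots `±φ`, `±φ⁻¹`, `φ²` and `φ⁻²`, written as a product of rational
quadratics. Its sign decides whether the image line of the degenerate matrix meets the cone. -/
def goldenSextic (t : ℝ) : ℝ :=
  (t ^ 2 + t - 1) * (t ^ 2 - 3 * t + 1) * (t ^ 2 - t - 1)

section Degenerate

variable {τ : ℝ}

theorem M_eq_vecMulVec (h0 : τ ≠ 0) (h1 : τ ≠ 1) :
    M (1 / (1 - τ)) (1 - 1 / τ) τ =
      vecMulVec ![(1 - τ)⁻¹ ^ 2, τ⁻¹ ^ 2, 1 ^ 2] ![τ, 1 - τ, τ * (τ - 1)] := by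
  have one_sub_ne_zero : 1 - τ ≠ 0 := sub_ne_zero.2 h1.symm
  ext i j
  fin_cases i <;> fin_cases j <;>
    simp only [M, vecMulVec_apply, of_apply, Fin.zero_eta, Fin.mk_one, Fin.reduceFinMk,
      cons_val] <;>
    field_simp <;> ring

theorem sq_inv_mem_Q_iff (h0 : τ ≠ 0) (h1 : τ ≠ 1) :
    ![(1 - τ)⁻¹ ^ 2, τ⁻¹ ^ 2, 1 ^ 2] ∈ Q ↔ goldenSextic τ < 0 := by
  have one_sub_ne_zero : 1 - τ ≠ 0 := sub_ne_zero.2 h1.symm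
  have cofactor_pos : 0 < (τ ^ 2 - τ + 1) / (τ * (1 - τ)) ^ 4 := by
    have : 0 < τ ^ 2 - τ + 1 := by linear_combination sq_nonneg (τ - 1 / 2)
    positivity
  have factorization :
      ((1 - τ)⁻¹ + τ⁻¹ + 1) * (-(1 - τ)⁻¹ + τ⁻¹ + 1) * ((1 - τ)⁻¹ - τ⁻¹ + 1) *
          ((1 - τ)⁻¹ + τ⁻¹ - 1) =
        (τ ^ 2 - τ + 1) / (τ * (1 - τ)) ^ 4 * -goldenSextic τ := by
    unfold goldenSextic
    field_simp
    ring
  rw [sq_mem_Q_iff (inv_ne_zero one_sub_ne_zero) (inv_ne_zero h0) one_ne_zero, factorization,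
    mul_pos_iff_of_pos_left cofactor_pos, neg_pos]

end Degenerate

theorem phi_eq_goldenRatio : phi = Real.goldenRatio := rfl

theorem phi_inv_eq : phi⁻¹ = phi - 1 := by
  rw [phi_eq_goldenRatio, Real.inv_goldenRatio]
  linear_combination -Real.goldenRatio_add_goldenConj

theorem phi_sq_eq : phi ^ 2 = phi + 1 := Real.goldenRatio_sq

theorem phi_sq_inv_eq : (phi ^ 2)⁻¹ = 2 - phi := by
  rw [← inv_pow, phi_inv_eq]
  linear_combination phi_sq_eq

theorem goldenSextic_eq_mul_phi (t : ℝ) :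
    goldenSextic t =
      ((t - -phi) * (t - -phi⁻¹)) * ((t - (phi ^ 2)⁻¹) * (t - phi⁻¹)) *
        ((t - phi) * (t - phi ^ 2)) := by
  have sq_add_factor : t ^ 2 + t - 1 = (t - -phi) * (t - phi⁻¹) := by
    rw [phi_inv_eq]; linear_combination phi_sq_eq
  have sq_sub_factor : t ^ 2 - t - 1 = (t - phi) * (t - -phi⁻¹) := by
    rw [phi_inv_eq]; linear_combination phi_sq_eq
  have reciprocal_factor : t ^ 2 - 3 * t + 1 = (t - (phi ^ 2)⁻¹) * (t - phi ^ 2) := by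
    rw [phi_sq_inv_eq, phi_sq_eq]; linear_combination phi_sq_eq
  rw [goldenSextic, sq_add_factor, sq_sub_factor, reciprocal_factor]
  ring

theorem goldenSextic_neg_iff (t : ℝ) :
    goldenSextic t < 0 ↔
      t ∈ Ioo (-phi) (-phi⁻¹) ∪ Ioo (phi ^ 2)⁻¹ phi⁻¹ ∪ Ioo phi (phi ^ 2) := by
  have one_lt_phi : 1 < phi := Real.one_lt_goldenRatio
  have inv_lt_one : phi⁻¹ < 1 := inv_lt_one_of_one_lt₀ one_lt_phi
  have lt_sq : phi < phi ^ 2 := lt_self_pow₀ one_lt_phi one_lt_two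
  have sq_inv_lt_inv : (phi ^ 2)⁻¹ < phi⁻¹ := inv_strictAnti₀ Real.goldenRatio_pos lt_sq
  have sq_inv_pos : 0 < (phi ^ 2)⁻¹ := by positivity
  let l : Fin 3 → ℝ := ![-phi, (phi ^ 2)⁻¹, phi]
  let r : Fin 3 → ℝ := ![-phi⁻¹, phi⁻¹, phi ^ 2]
  have hle : ∀ i, l i ≤ r i := by
    intro i
    fin_cases i <;>
      simp only [l, r, Fin.zero_eta, Fin.mk_one, Fin.reduceFinMk, cons_val] <;> linarith
  have hlt : ∀ i j, i < j → r i < l j := by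
    intro i j hij
    fin_cases i <;> fin_cases j <;> first
      | exact absurd hij (by decide)
      | simp only [l, r, Fin.zero_eta, Fin.mk_one, Fin.reduceFinMk, cons_val]; linarith
  have hdisj : Pairwise fun i j => Disjoint (Icc (l i) (r i)) (Icc (l j) (r j)) :=
    (pairwise_disjoint_on _).2 fun i j hij => disjoint_left.2 fun _ hi hj =>
      (hi.2.trans_lt (hlt i j hij)).not_ge hj.1
  have hprod := prod_sub_mul_sub_neg_iff_exists_mem_Ioo hle hdisj t
  simpa [goldenSextic_eq_mul_phi, Fin.prod_univ_three, Fin.exists_fin_succ, l, r, or_assoc]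
    using hprod

theorem degenerate_matrix_maps_cone_iff (τ : ℝ) (h0 : τ ≠ 0) (h1 : τ ≠ 1) :
    (M (1 / (1 - τ)) (1 - 1 / τ) τ).mulVec '' Q ⊆ Q ↔
      τ ∈ Set.Ioo (-phi) (-phi⁻¹) ∪ Set.Ioo (phi ^ 2)⁻¹ phi⁻¹ ∪
        Set.Ioo phi (phi ^ 2) := by
  rw [M_eq_vecMulVec h0 h1,
    image_vecMulVec_subset_iff ⟨1, one_mem_Q⟩ smul_mem_Q fun _ hv => dotProduct_pos_of_mem_Q hv τ,
    sq_inv_mem_Q_iff h0 h1, goldenSextic_neg_iff]
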